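/- Let (R, ν) be a normalized BV₀ pair on (−1,1) of class BV₊ on I = (a₋, a₊). For every f ∈ D^I_{R,ν}, the limits L₊(f) = lim_{t→a₊⁻} (T_{R,ν}f)(t) and L₋(f) = lim_{t→a₋⁺} (T_{R,ν}f)(t) exist, and the map sending f ∈ D^I_{R,ν} to the function g : [−1,1] → ℝ defined by g(t) = (T_{R,ν}f)(t) for t ∈ I, g(t) = (L₊(f)/a₊)·t for t ∈ [a₊,1], and g(t) = (L₋(f)/a₋)·t for t ∈ [−1,a₋], is a bijection from D^I_{R,ν} onto the set of all continuous functions g : [−1,1] → ℝ satisfying g(t) = (g(a₊)/a₊)·t for all t ∈ [a₊,1] and g(t) = (g(a₋)/a₋)·t for all t ∈ [−1,a₋]. -/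

import Mathlib

open MeasureTheory Set Filter Function Topology

/-- A normalized BV₀ pair on `(-1,1)`: a signed Borel measure, represented by its
mutually singular positive part `νp` and negative part `νm`, that is finite on compact
subsets of `(-1,1)`, gives no mass to `{0}` and lives on `(-1,1)`, together with a
function `R` satisfying the fundamental-theorem-of-calculus relations. -/
structure NormBV0 where
  R : ℝ → ℝ
  νp : Measure ℝ
  νm : Measure ℝ
  sing : νp.MutuallySingular νm
  supp_p : νp (Set.Ioo (-1 : ℝ) 1)ᶜ = 0
  supp_m : νm (Set.Ioo (-1 : ℝ) 1)ᶜ = 0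
  locfin_p : ∀ K : Set ℝ, IsCompact K → K ⊆ Set.Ioo (-1 : ℝ) 1 → νp K ≠ ⊤
  locfin_m : ∀ K : Set ℝ, IsCompact K → K ⊆ Set.Ioo (-1 : ℝ) 1 → νm K ≠ ⊤
  zero_p : νp {0} = 0
  zero_m : νm {0} = 0
  fund_pos : ∀ t ∈ Set.Ico (0 : ℝ) 1,
    R t = R 0 - ((∫ s in Set.Ioc (0 : ℝ) t, s ∂νp) - (∫ s in Set.Ioc (0 : ℝ) t, s ∂νm))
  fund_neg : ∀ t ∈ Set.Ioc (-1 : ℝ) 0,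
    R t = R 0 + ((∫ s in Set.Ico t (0 : ℝ), s ∂νp) - (∫ s in Set.Ico t (0 : ℝ), s ∂νm))

/-- The integral of `f` over `S` with respect to the signed measure `νp - νm`. -/
noncomputable def NormBV0.integ (P : NormBV0) (S : Set ℝ) (f : ℝ → ℝ) : ℝ :=
  (∫ s in S, f s ∂P.νp) - (∫ s in S, f s ∂P.νm)

/-- The transform `T_{R,ν} f`. -/
noncomputable def NormBV0.T (P : NormBV0) (f : ℝ → ℝ) (t : ℝ) : ℝ :=
  if 0 < t then P.R t * f t + t * P.integ (Set.Ioc 0 t) f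
  else P.R t * f t - t * P.integ (Set.Ico t 0) f

/-- The pair `(R,ν)` is of class `BV₊` on the subinterval `I = (am, ap)`:
`|ν|((-1,1)) < ∞`, `R > 0` on `I`, and `ν` or `-ν` is nonnegative. -/
def NormBV0.BVplusOn (P : NormBV0) (am ap : ℝ) : Prop :=
  P.νp (Set.Ioo (-1 : ℝ) 1) ≠ ⊤ ∧ P.νm (Set.Ioo (-1 : ℝ) 1) ≠ ⊤ ∧
  (∀ t ∈ Set.Ioo am ap, 0 < P.R t) ∧ (P.νm = 0 ∨ P.νp = 0)

/-- The class `D^I_{R,ν}` of continuous functions on `I = (am, ap)` whose four boundary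
limits exist. -/
def NormBV0.memDI (P : NormBV0) (am ap : ℝ) (f : ℝ → ℝ) : Prop :=
  ContinuousOn f (Set.Ioo am ap) ∧
  (∃ L : ℝ, Tendsto (fun t => P.R t * f t) (𝓝[<] ap) (𝓝 L)) ∧
  (∃ L : ℝ, Tendsto (fun t => P.R t * f t) (𝓝[>] am) (𝓝 L)) ∧
  (∃ L : ℝ, Tendsto (fun t => P.integ (Set.Ioc 0 t) f) (𝓝[<] ap) (𝓝 L)) ∧
  (∃ L : ℝ, Tendsto (fun t => P.integ (Set.Ico t 0) f) (𝓝[>] am) (𝓝 L))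

/-!
Since `dR = -t dν`, the product rule turns `T f = R f + t ∫ f dν` into `d(T f / t) = R⁻ d(f / t)`,
where `R⁻` is the left limit. Uniqueness is then a Grönwall argument, and integrating back gives
`f = g / R - t ∫ g / (R R⁻) dν` as the solution of `T f = g`. As `d(1 / R) = t / (R R⁻) dν`, this
solution is `g / R(0)` plus the integral of the kernel `s g(t) - t g(s)` against `dν / (R R⁻)`. The
kernel vanishes on the diagonal, so `f` is continuous even where `ν` has atoms. At an end point the
only delicate case is `R → 0`, where `R ∫ g / (R R⁻) dν` converges by L'Hôpital's rule.
-/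

section StieltjesCalculus

variable {μ : Measure ℝ} {a b : ℝ}

theorem tendsto_setIntegral_Ioo_nhdsGT {f : ℝ → ℝ} (hab : a < b)
    (hf : IntegrableOn f (Ioc a b) μ) :
    Tendsto (fun t => ∫ s in Ioo a t, f s ∂μ) (𝓝[>] a) (𝓝 0) := by
  have hlim : Tendsto (fun t => ∫ s in Ioc a b, (Ioo a t).indicator f s ∂μ) (𝓝[>] a)
      (𝓝 (∫ _ in Ioc a b, 0 ∂μ)) := by
    refine tendsto_integral_filter_of_dominated_convergence (fun s => ‖f s‖)
      (.of_forall fun t => hf.aestronglyMeasurable.indicator measurableSet_Ioo)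
      (.of_forall fun t => ae_of_all _ fun s => norm_indicator_le_norm_self _ _) hf.norm ?_
    filter_upwards [ae_restrict_mem measurableSet_Ioc] with s hs
    refine tendsto_const_nhds.congr' ?_
    filter_upwards [Ioo_mem_nhdsGT hs.1] with t ht
    exact (indicator_of_notMem (fun h => ht.2.not_gt h.2) f).symm
  rw [integral_zero] at hlim
  refine hlim.congr' ?_
  filter_upwards [Ioo_mem_nhdsGT hab] with t ht
  rw [setIntegral_indicator measurableSet_Ioo,
    inter_eq_right.2 (Ioo_subset_Ioc_self.trans (Ioc_subset_Ioc_right ht.2.le))]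

theorem tendsto_setIntegral_Ioc_nhdsLT {f : ℝ → ℝ} (hab : a < b)
    (hf : IntegrableOn f (Ioo a b) μ) :
    Tendsto (fun t => ∫ s in Ioc a t, f s ∂μ) (𝓝[<] b) (𝓝 (∫ s in Ioo a b, f s ∂μ)) := by
  have hcover : AECover (μ.restrict (Ioo a b)) (𝓝[<] b) fun t => Ioc a t :=
    aecover_Ioo_of_Ioc tendsto_const_nhds (tendsto_id.mono_left nhdsWithin_le_nhds)
  refine (hcover.integral_tendsto_of_countably_generated hf).congr' ?_
  filter_upwards [Ioo_mem_nhdsLT hab] with t ht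
  rw [Measure.restrict_restrict measurableSet_Ioc,
    inter_eq_left.2 (show Ioc a t ⊆ Ioo a b from fun s hs => ⟨hs.1, hs.2.trans_lt ht.2⟩)]

theorem setIntegral_Ioc_eq_Ioo_add {f : ℝ → ℝ} (hab : a < b) (hf : IntegrableOn f (Ioc a b) μ) :
    ∫ s in Ioc a b, f s ∂μ = (∫ s in Ioo a b, f s ∂μ) + μ.real {b} * f b := by
  rw [← Ioo_union_right hab, setIntegral_union (by simp) (measurableSet_singleton b)
    (hf.mono_set Ioo_subset_Ioc_self) (hf.mono_set (by simpa using hab)), integral_singleton,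
    smul_eq_mul]

theorem exists_forall_mem_Ioc_eq_zero {p y : ℝ → ℝ} (hab : a < b)
    (hp : IntegrableOn p (Ioc a b) μ) (hy : IntegrableOn y (Ioc a b) μ)
    (hp0 : ∀ t ∈ Ioc a b, 0 ≤ p t) (hy0 : ∀ t ∈ Ioc a b, 0 ≤ y t)
    (h : ∀ t ∈ Ioc a b, y t ≤ p t * ∫ s in Ioo a t, y s ∂μ) :
    ∃ t ∈ Ioc a b, ∀ s ∈ Ioc a t, y s = 0 := by
  obtain ⟨t, hpt, ht⟩ := (((tendsto_setIntegral_Ioo_nhdsGT hab hp).eventually_lt_const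
    zero_lt_one).and (Ioc_mem_nhdsGT hab)).exists
  have hsub : Ioo a t ⊆ Ioc a b := fun s hs => ⟨hs.1, hs.2.le.trans ht.2⟩
  have hmono : ∀ s ∈ Ioc a t, ∫ r in Ioo a s, y r ∂μ ≤ ∫ r in Ioo a t, y r ∂μ := fun s hs => by
    refine setIntegral_mono_set (hy.mono_set hsub) ?_ (Ioo_subset_Ioo_right hs.2).eventuallyLE
    filter_upwards [ae_restrict_mem measurableSet_Ioo] with r hr using hy0 r (hsub hr)
  have hbound : ∀ s ∈ Ioc a t, y s ≤ p s * ∫ r in Ioo a t, y r ∂μ := fun s hs =>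
    have hs' : s ∈ Ioc a b := ⟨hs.1, hs.2.trans ht.2⟩
    (h s hs').trans (mul_le_mul_of_nonneg_left (hmono s hs) (hp0 s hs'))
  have hnonneg : 0 ≤ ∫ s in Ioo a t, y s ∂μ :=
    setIntegral_nonneg measurableSet_Ioo fun s hs => hy0 s (hsub hs)
  have hcontract : ∫ s in Ioo a t, y s ∂μ ≤
      (∫ s in Ioo a t, p s ∂μ) * ∫ s in Ioo a t, y s ∂μ := by
    rw [← integral_mul_const]
    exact setIntegral_mono_on (hy.mono_set hsub) ((hp.mono_set hsub).mul_const _)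
      measurableSet_Ioo fun s hs => hbound s (Ioo_subset_Ioc_self hs)
  have hzero : ∫ s in Ioo a t, y s ∂μ = 0 := by nlinarith
  refine ⟨t, ht, fun s hs => le_antisymm ?_ (hy0 s ⟨hs.1, hs.2.trans ht.2⟩)⟩
  simpa only [hzero, mul_zero] using hbound s hs

theorem eq_zero_of_le_mul_setIntegral_Ioo {p y : ℝ → ℝ}
    (hp : IntegrableOn p (Ioc a b) μ) (hy : IntegrableOn y (Ioc a b) μ)
    (hp0 : ∀ t ∈ Ioc a b, 0 ≤ p t) (hy0 : ∀ t ∈ Ioc a b, 0 ≤ y t)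
    (h : ∀ t ∈ Ioc a b, y t ≤ p t * ∫ s in Ioo a t, y s ∂μ) {t : ℝ} (ht : t ∈ Ioc a b) :
    y t = 0 := by
  have hab : a ≤ b := ht.1.le.trans ht.2
  set Z := {x ∈ Icc a b | ∀ s ∈ Ioc a x, y s = 0}
  have haZ : a ∈ Z := ⟨left_mem_Icc.2 hab, by simp⟩
  have hbdd : BddAbove Z := ⟨b, fun x hx => hx.1.2⟩
  set x := sSup Z
  have hax : a ≤ x := le_csSup hbdd haZ
  have hxb : x ≤ b := csSup_le ⟨a, haZ⟩ fun z hz => hz.1.2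
  have hlt : ∀ s ∈ Ioo a x, y s = 0 := fun s hs => by
    obtain ⟨z, hz, hsz⟩ := exists_lt_of_lt_csSup ⟨a, haZ⟩ hs.2
    exact hz.2 s ⟨hs.1, hsz.le⟩
  have hle : ∀ s ∈ Ioc a x, y s = 0 := fun s hs => by
    have hs' : s ∈ Ioc a b := ⟨hs.1, hs.2.trans hxb⟩
    refine le_antisymm ((h s hs').trans_eq ?_) (hy0 s hs')
    rw [setIntegral_congr_fun measurableSet_Ioo fun r hr => hlt r ⟨hr.1, hr.2.trans_le hs.2⟩,
      integral_zero, mul_zero]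
  rcases hxb.eq_or_lt with hxb | hxb
  · exact hle t (hxb ▸ ht)
  have hsub : Ioc x b ⊆ Ioc a b := Ioc_subset_Ioc_left hax
  have hint (t : ℝ) : ∫ s in Ioo a t, y s ∂μ = ∫ s in Ioo x t, y s ∂μ :=
    setIntegral_eq_of_subset_of_forall_sdiff_eq_zero measurableSet_Ioo
      (Ioo_subset_Ioo_left hax) fun s hs =>
        hle s ⟨hs.1.1, le_of_not_gt fun hxs => hs.2 ⟨hxs, hs.1.2⟩⟩
  obtain ⟨r, hr, hr0⟩ := exists_forall_mem_Ioc_eq_zero hxb (hp.mono_set hsub)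
    (hy.mono_set hsub) (fun t ht => hp0 t (hsub ht)) (fun t ht => hy0 t (hsub ht))
    fun t ht => (h t (hsub ht)).trans_eq (by rw [hint])
  have hrZ : r ∈ Z := ⟨⟨hax.trans hr.1.le, hr.2⟩, fun s hs =>
    (le_or_gt s x).elim (fun hsx => hle s ⟨hs.1, hsx⟩) fun hsx => hr0 s ⟨hsx, hs.2⟩⟩
  exact absurd (le_csSup hbdd hrZ) hr.1.not_ge

theorem continuousOn_setIntegral_Ioc_of_diagonal_eq_zero {k : ℝ → ℝ → ℝ} {q : ℝ → ℝ}
    (hk : ContinuousOn (uncurry k) (Icc a b ×ˢ Icc a b)) (hdiag : ∀ s ∈ Icc a b, k s s = 0)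
    (hq : IntegrableOn q (Ioc a b) μ) :
    ContinuousOn (fun t => ∫ s in Ioc a t, k t s * q s ∂μ) (Icc a b) := by
  obtain ⟨C, hC⟩ := (isCompact_Icc.prod isCompact_Icc).exists_bound_of_continuousOn hk
  have hmem {t s : ℝ} (ht : t ∈ Icc a b) (hs : s ∈ Icc a b) : max t s ∈ Icc a b :=
    ⟨ht.1.trans (le_max_left _ _), max_le ht.2 hs.2⟩
  have hK {s : ℝ} (hs : s ∈ Icc a b) : ContinuousOn (fun t => k (max t s) s) (Icc a b) :=
    hk.comp (f := fun t => (max t s, s)) (by fun_prop) fun t ht => ⟨hmem ht hs, hs⟩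
  have hK' {t : ℝ} (ht : t ∈ Icc a b) : ContinuousOn (fun s => k (max t s) s) (Icc a b) :=
    hk.comp (f := fun s => (max t s, s)) (by fun_prop) fun s hs => ⟨hmem ht hs, hs⟩
  have hcont : ContinuousOn (fun t => ∫ s in Ioc a b, k (max t s) s * q s ∂μ) (Icc a b) := by
    refine continuousOn_of_dominated (bound := fun s => C * ‖q s‖) (fun t ht => ?_)
      (fun t ht => ?_) (hq.norm.const_mul C) ?_
    · exact (((hK' ht).mono Ioc_subset_Icc_self).aestronglyMeasurable measurableSet_Ioc).mul
        hq.aestronglyMeasurable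
    · filter_upwards [ae_restrict_mem measurableSet_Ioc] with s hs
      have hs := Ioc_subset_Icc_self hs
      exact (norm_mul_le _ _).trans
        (mul_le_mul_of_nonneg_right (hC (_, s) ⟨hmem ht hs, hs⟩) (norm_nonneg _))
    · filter_upwards [ae_restrict_mem measurableSet_Ioc] with s hs
      exact (hK (Ioc_subset_Icc_self hs)).mul continuousOn_const
  refine hcont.congr fun t ht => ?_
  calc ∫ s in Ioc a t, k t s * q s ∂μ = ∫ s in Ioc a t, k (max t s) s * q s ∂μ :=
        setIntegral_congr_fun measurableSet_Ioc fun s hs => by simp only [max_eq_left hs.2]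
    _ = ∫ s in Ioc a b, k (max t s) s * q s ∂μ := by
      refine (setIntegral_eq_of_subset_of_forall_sdiff_eq_zero measurableSet_Ioc
        (Ioc_subset_Ioc_right ht.2) fun s hs => ?_).symm
      have hts : t ≤ s := le_of_not_ge fun hst => hs.2 ⟨hs.1.1, hst⟩
      rw [max_eq_right hts, hdiag s (Ioc_subset_Icc_self hs.1), zero_mul]

theorem continuousOn_mul_setIntegral_Ioc_sub {g q : ℝ → ℝ} (hg : ContinuousOn g (Icc a b))
    (hq : IntegrableOn q (Ioc a b) μ) :
    ContinuousOn (fun t => g t * ∫ s in Ioc a t, s * q s ∂μ - t * ∫ s in Ioc a t, g s * q s ∂μ)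
      (Icc a b) := by
  have hker : ContinuousOn (uncurry fun t s => g t * s - t * g s) (Icc a b ×ˢ Icc a b) :=
    ((hg.comp continuousOn_fst fun _ hz => hz.1).mul continuousOn_snd).sub
      (continuousOn_fst.mul (hg.comp continuousOn_snd fun _ hz => hz.2))
  have hint {p : ℝ → ℝ} (hp : ContinuousOn p (Icc a b)) {t : ℝ} (ht : t ∈ Icc a b) :
      IntegrableOn (fun s => p s * q s) (Ioc a t) μ :=
    (hq.continuousOn_mul_of_subset hp isCompact_Icc measurableSet_Ioc
      Ioc_subset_Icc_self).mono_set (Ioc_subset_Ioc_right ht.2)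
  refine (continuousOn_setIntegral_Ioc_of_diagonal_eq_zero hker
    (fun s _ => by rw [mul_comm, sub_self]) hq).congr fun t ht => ?_
  simp only [sub_mul, mul_assoc]
  rw [integral_sub ((hint (p := fun s => s) continuousOn_id ht).const_mul _)
    ((hint hg ht).const_mul _), integral_const_mul, integral_const_mul]

theorem isLittleO_setIntegral_Ioc_nhdsLT {f p : ℝ → ℝ} (hab : a < b)
    (hf : ∀ t ∈ Ioo a b, IntegrableOn f (Ioc a t) μ)
    (hp : ∀ t ∈ Ioo a b, IntegrableOn p (Ioc a t) μ)
    (hp0 : ∀ s ∈ Ioo a b, 0 ≤ p s) (hfp : f =o[𝓝[<] b] p)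
    (hlim : Tendsto (fun t => ∫ s in Ioc a t, p s ∂μ) (𝓝[<] b) atTop) :
    (fun t => ∫ s in Ioc a t, f s ∂μ) =o[𝓝[<] b] fun t => ∫ s in Ioc a t, p s ∂μ := by
  refine Asymptotics.isLittleO_iff.2 fun ε hε => ?_
  obtain ⟨l, hl, hbound⟩ := (mem_nhdsLT_iff_exists_Ioo_subset' hab).1
    (Asymptotics.isLittleO_iff.1 hfp (half_pos hε))
  obtain ⟨x, hx, hxb⟩ := exists_between (max_lt hab hl)
  have hax : a < x := (le_max_left _ _).trans_lt hx
  filter_upwards [hlim.eventually_ge_atTop (‖∫ s in Ioc a x, f s ∂μ‖ / (ε / 2)),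
    Ioo_mem_nhdsLT hxb] with t hlarge ht
  have htb : t ∈ Ioo a b := ⟨hax.trans ht.1, ht.2⟩
  have hsub : Ioc x t ⊆ Ioc a t := Ioc_subset_Ioc_left hax.le
  have hp0' : ∀ s ∈ Ioc a t, 0 ≤ p s := fun s hs => hp0 s ⟨hs.1, hs.2.trans_lt ht.2⟩
  have htail : ‖∫ s in Ioc x t, f s ∂μ‖ ≤ ε / 2 * ∫ s in Ioc a t, p s ∂μ := calc
    ‖∫ s in Ioc x t, f s ∂μ‖ ≤ ∫ s in Ioc x t, ε / 2 * p s ∂μ := by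
      refine norm_integral_le_of_norm_le (((hp t htb).mono_set hsub).const_mul _) ?_
      filter_upwards [ae_restrict_mem measurableSet_Ioc] with s hs
      have hs' := hbound ⟨((le_max_right _ _).trans_lt hx).trans hs.1, hs.2.trans_lt ht.2⟩
      rwa [mem_ofPred_eq, Real.norm_of_nonneg (hp0' s (hsub hs))] at hs'
    _ ≤ ε / 2 * ∫ s in Ioc a t, p s ∂μ := by
      rw [integral_const_mul]
      refine mul_le_mul_of_nonneg_left (setIntegral_mono_set (hp t htb) ?_
        hsub.eventuallyLE) (half_pos hε).le
      filter_upwards [ae_restrict_mem measurableSet_Ioc] with s hs using hp0' s hs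
  have hsplit : ∫ s in Ioc a t, f s ∂μ = (∫ s in Ioc a x, f s ∂μ) + ∫ s in Ioc x t, f s ∂μ := by
    rw [← Ioc_union_Ioc_eq_Ioc hax.le ht.1.le, setIntegral_union (Ioc_disjoint_Ioc_of_le le_rfl)
      measurableSet_Ioc (hf x ⟨hax, hxb⟩) ((hf t htb).mono_set hsub)]
  rw [Real.norm_of_nonneg (setIntegral_nonneg measurableSet_Ioc hp0'), hsplit]
  have hhead := (div_le_iff₀' (half_pos hε)).1 hlarge
  linarith [norm_add_le (∫ s in Ioc a x, f s ∂μ) (∫ s in Ioc x t, f s ∂μ)]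

theorem tendsto_mul_setIntegral_Ioc_nhdsLT {R f p : ℝ → ℝ} {m l : ℝ} (hab : a < b)
    (hf : ∀ t ∈ Ioo a b, IntegrableOn f (Ioc a t) μ)
    (hp : ∀ t ∈ Ioo a b, IntegrableOn p (Ioc a t) μ)
    (hp0 : ∀ s ∈ Ioo a b, 0 ≤ p s) (hfp : (fun s => f s - m * p s) =o[𝓝[<] b] p)
    (hlim : Tendsto (fun t => ∫ s in Ioc a t, p s ∂μ) (𝓝[<] b) atTop)
    (hR : Tendsto (fun t => R t * ∫ s in Ioc a t, p s ∂μ) (𝓝[<] b) (𝓝 l)) :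
    Tendsto (fun t => R t * ∫ s in Ioc a t, f s ∂μ) (𝓝[<] b) (𝓝 (m * l)) := by
  have hsmall := isLittleO_setIntegral_Ioc_nhdsLT hab
    (fun t ht => (hf t ht).sub ((hp t ht).const_mul m)) hp hp0 hfp hlim
  have hzero := (((Asymptotics.isBigO_refl R _).mul_isLittleO hsmall).trans_isBigO
    (hR.isBigO_one ℝ)).tendsto_div_nhds_zero
  have hsum := hzero.add (hR.const_mul m)
  rw [zero_add] at hsum
  refine hsum.congr' ?_
  filter_upwards [Ioo_mem_nhdsLT hab] with t ht
  rw [integral_sub' (hf t ht) ((hp t ht).const_mul m), integral_const_mul]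
  ring

theorem integral_indicator_lt_mul (u v : ℝ → ℝ) {y : ℝ} (hy : y ∈ Ioc a b) :
    ∫ x in Ioc a b, {z : ℝ × ℝ | z.1 < z.2}.indicator (fun z => u z.1 * v z.2) (x, y) ∂μ =
      (∫ x in Ioo a y, u x ∂μ) * v y := by
  have hind : (fun x => {z : ℝ × ℝ | z.1 < z.2}.indicator (fun z => u z.1 * v z.2) (x, y)) =
      (Iio y).indicator fun x => u x * v y := rfl
  have hset : Ioc a b ∩ Iio y = Ioo a y := by
    ext x
    exact ⟨fun h => ⟨h.1.1, h.2⟩, fun h => ⟨⟨h.1, h.2.le.trans hy.2⟩, h.2⟩⟩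
  rw [hind, setIntegral_indicator measurableSet_Iio, hset, integral_mul_const]

theorem integral_indicator_le_mul (u v : ℝ → ℝ) {x : ℝ} (hx : x ≤ b) :
    ∫ y in Ioc a b, {z : ℝ × ℝ | z.1 < z.2}ᶜ.indicator (fun z => u z.1 * v z.2) (x, y) ∂μ =
      u x * ∫ y in Ioc a x, v y ∂μ := by
  have hind : (fun y => {z : ℝ × ℝ | z.1 < z.2}ᶜ.indicator (fun z => u z.1 * v z.2) (x, y)) =
      (Iic x).indicator fun y => u x * v y := by
    funext y
    simp only [indicator, mem_compl_iff, mem_ofPred_eq, not_lt, mem_Iic]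
  rw [hind, setIntegral_indicator measurableSet_Iic, Ioc_inter_Iic, inf_eq_right.2 hx,
    integral_const_mul]

variable [SFinite μ] {u v : ℝ → ℝ}

theorem integrableOn_setIntegral_Ioo_mul (hu : IntegrableOn u (Ioc a b) μ)
    (hv : IntegrableOn v (Ioc a b) μ) :
    IntegrableOn (fun y => (∫ x in Ioo a y, u x ∂μ) * v y) (Ioc a b) μ := by
  refine ((hu.mul_prod hv).indicator
    (measurableSet_lt measurable_fst measurable_snd)).integral_prod_right.congr ?_
  filter_upwards [ae_restrict_mem measurableSet_Ioc] with y hy using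
    integral_indicator_lt_mul u v hy

theorem integrableOn_mul_setIntegral_Ioc (hu : IntegrableOn u (Ioc a b) μ)
    (hv : IntegrableOn v (Ioc a b) μ) :
    IntegrableOn (fun x => u x * ∫ y in Ioc a x, v y ∂μ) (Ioc a b) μ := by
  refine ((hu.mul_prod hv).indicator
    (measurableSet_lt measurable_fst measurable_snd).compl).integral_prod_left.congr ?_
  filter_upwards [ae_restrict_mem measurableSet_Ioc] with x hx using
    integral_indicator_le_mul u v hx.2

theorem setIntegral_Ioc_mul_setIntegral_Ioc (hu : IntegrableOn u (Ioc a b) μ)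
    (hv : IntegrableOn v (Ioc a b) μ) :
    (∫ x in Ioc a b, u x ∂μ) * ∫ y in Ioc a b, v y ∂μ =
      (∫ y in Ioc a b, (∫ x in Ioo a y, u x ∂μ) * v y ∂μ) +
        ∫ x in Ioc a b, u x * ∫ y in Ioc a x, v y ∂μ ∂μ := by
  have hlt : MeasurableSet {z : ℝ × ℝ | z.1 < z.2} :=
    measurableSet_lt measurable_fst measurable_snd
  have hprod := hu.mul_prod hv
  rw [← integral_prod_mul, ← integral_add_compl hlt hprod, ← integral_indicator hlt,
    ← integral_indicator hlt.compl, integral_prod_symm _ (hprod.indicator hlt),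
    integral_prod _ (hprod.indicator hlt.compl)]
  congr 1 <;> refine setIntegral_congr_fun measurableSet_Ioc fun x hx => ?_
  · exact integral_indicator_lt_mul u v hx
  · exact integral_indicator_le_mul u v hx.2

end StieltjesCalculus

/-- The right-continuous function on `[a, ∞)` with value `c` at `a` and differential `-w dμ`. -/
noncomputable def bvRight (μ : Measure ℝ) (w : ℝ → ℝ) (a c t : ℝ) : ℝ :=
  c - ∫ s in Ioc a t, w s ∂μ

/-- The left-continuous function on `(a, ∞)` which agrees with `bvRight μ w a c` off the atoms
of `μ`; its value at `t` is the left limit of `bvRight μ w a c` there. -/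
noncomputable def bvLeft (μ : Measure ℝ) (w : ℝ → ℝ) (a c t : ℝ) : ℝ :=
  c - ∫ s in Ioo a t, w s ∂μ

/-- On `S`, the function `bvRight μ w a c` and its left limits are bounded below by a positive
constant. -/
def BVUniformPos (μ : Measure ℝ) (w : ℝ → ℝ) (a c : ℝ) (S : Set ℝ) : Prop :=
  ∃ k > 0, ∀ t ∈ S, k ≤ bvRight μ w a c t ∧ k ≤ bvLeft μ w a c t

section BoundedVariation

variable {μ : Measure ℝ} {w u g : ℝ → ℝ} {a b c : ℝ}

theorem bvLeft_eq_bvRight_add (hab : a < b) (hw : IntegrableOn w (Ioc a b) μ) :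
    bvLeft μ w a c b = bvRight μ w a c b + μ.real {b} * w b := by
  rw [bvLeft, bvRight, setIntegral_Ioc_eq_Ioo_add hab hw]
  ring

theorem tendsto_bvRight_nhdsLT (hab : a < b) (hw : IntegrableOn w (Ioo a b) μ) :
    Tendsto (bvRight μ w a c) (𝓝[<] b) (𝓝 (bvLeft μ w a c b)) :=
  (tendsto_setIntegral_Ioc_nhdsLT hab hw).const_sub c

namespace BVUniformPos

theorem mono {S S' : Set ℝ} (h : BVUniformPos μ w a c S') (hSS' : S ⊆ S') :
    BVUniformPos μ w a c S :=
  let ⟨k, hk, hle⟩ := h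
  ⟨k, hk, fun t ht => hle t (hSS' ht)⟩

theorem bvRight_pos {S : Set ℝ} (h : BVUniformPos μ w a c S) {t : ℝ} (ht : t ∈ S) :
    0 < bvRight μ w a c t :=
  let ⟨_, hk, hle⟩ := h
  hk.trans_le (hle t ht).1

theorem bvLeft_pos {S : Set ℝ} (h : BVUniformPos μ w a c S) {t : ℝ} (ht : t ∈ S) :
    0 < bvLeft μ w a c t :=
  let ⟨_, hk, hle⟩ := h
  hk.trans_le (hle t ht).2

end BVUniformPos

theorem min_le_sub_setIntegral {S S' : Set ℝ} (hS : MeasurableSet S) (hS' : MeasurableSet S')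
    (hSS' : S ⊆ S') (hw : IntegrableOn w S' μ)
    (hsign : (∀ s ∈ S', 0 ≤ w s) ∨ ∀ s ∈ S', w s ≤ 0) :
    min c (c - ∫ s in S', w s ∂μ) ≤ c - ∫ s in S, w s ∂μ := by
  rcases hsign with h | h
  · refine (min_le_right _ _).trans (sub_le_sub_left (setIntegral_mono_set hw ?_ ?_) c)
    · filter_upwards [ae_restrict_mem hS'] with s hs using h s hs
    · exact hSS'.eventuallyLE
  · exact (min_le_left _ _).trans <| (le_sub_self_iff _).2 <|
      setIntegral_nonpos hS fun s hs => h s (hSS' hs)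

theorem bvUniformPos_Ioc (hw : IntegrableOn w (Ioc a b) μ)
    (hsign : (∀ s ∈ Ioc a b, 0 ≤ w s) ∨ ∀ s ∈ Ioc a b, w s ≤ 0) (hc : 0 < c)
    (hb : 0 < bvRight μ w a c b) : BVUniformPos μ w a c (Ioc a b) :=
  ⟨min c (bvRight μ w a c b), lt_min hc hb, fun _ ht =>
    ⟨min_le_sub_setIntegral measurableSet_Ioc measurableSet_Ioc
        (Ioc_subset_Ioc_right ht.2) hw hsign,
      min_le_sub_setIntegral measurableSet_Ioo measurableSet_Ioc
        (Ioo_subset_Ioc_self.trans (Ioc_subset_Ioc_right ht.2)) hw hsign⟩⟩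

theorem bvUniformPos_Ioo (hw : IntegrableOn w (Ioo a b) μ)
    (hsign : (∀ s ∈ Ioo a b, 0 ≤ w s) ∨ ∀ s ∈ Ioo a b, w s ≤ 0) (hc : 0 < c)
    (hb : 0 < bvLeft μ w a c b) : BVUniformPos μ w a c (Ioo a b) :=
  ⟨min c (bvLeft μ w a c b), lt_min hc hb, fun _ ht =>
    ⟨min_le_sub_setIntegral measurableSet_Ioc measurableSet_Ioo
        (fun _ hs => ⟨hs.1, hs.2.trans_lt ht.2⟩) hw hsign,
      min_le_sub_setIntegral measurableSet_Ioo measurableSet_Ioo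
        (Ioo_subset_Ioo_right ht.2.le) hw hsign⟩⟩

theorem eq_zero_of_bvRight_mul_add_setIntegral_eq_zero
    (hw : IntegrableOn w (Ioc a b) μ) (hwu : IntegrableOn (fun s => w s * u s) (Ioc a b) μ)
    (hpos : BVUniformPos μ w a c (Ioc a b))
    (h : ∀ t ∈ Ioc a b, bvRight μ w a c t * u t + ∫ s in Ioc a t, w s * u s ∂μ = 0)
    {t : ℝ} (ht : t ∈ Ioc a b) : u t = 0 := by
  obtain ⟨k, hk, hkle⟩ := hpos
  have hleft : ∀ t ∈ Ioc a b, bvLeft μ w a c t * u t = -∫ s in Ioo a t, w s * u s ∂μ :=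
    fun t ht => by
      have hsub : Ioc a t ⊆ Ioc a b := Ioc_subset_Ioc_right ht.2
      have h := h t ht
      rw [setIntegral_Ioc_eq_Ioo_add ht.1 (hwu.mono_set hsub)] at h
      rw [bvLeft_eq_bvRight_add ht.1 (hw.mono_set hsub)]
      linarith
  have hbound : ∀ t ∈ Ioc a b, |w t * u t| ≤ |w t| / k * ∫ s in Ioo a t, |w s * u s| ∂μ :=
    fun t ht => by
      have hu : k * |u t| ≤ ∫ s in Ioo a t, |w s * u s| ∂μ := calc
        k * |u t| ≤ |bvLeft μ w a c t * u t| := by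
          rw [abs_mul]
          exact mul_le_mul_of_nonneg_right ((hkle t ht).2.trans (le_abs_self _)) (abs_nonneg _)
        _ ≤ ∫ s in Ioo a t, |w s * u s| ∂μ := by
          rw [hleft t ht, abs_neg]
          exact abs_integral_le_integral_abs
      rw [abs_mul, div_mul_eq_mul_div, mul_div_assoc]
      exact mul_le_mul_of_nonneg_left ((le_div_iff₀' hk).2 hu) (abs_nonneg _)
  have hzero : ∀ s ∈ Ioc a b, w s * u s = 0 := fun s hs => abs_eq_zero.1 <|
    eq_zero_of_le_mul_setIntegral_Ioo (hw.norm.div_const k) hwu.norm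
      (fun s _ => div_nonneg (norm_nonneg _) hk.le) (fun s _ => norm_nonneg _) hbound hs
  have hLu := hleft t ht
  rw [setIntegral_congr_fun measurableSet_Ioo fun s hs => hzero s ⟨hs.1, hs.2.le.trans ht.2⟩,
    integral_zero, neg_zero] at hLu
  exact (mul_eq_zero.1 hLu).resolve_left (hk.trans_le (hkle t ht).2).ne'

variable [SFinite μ]

theorem measurable_bvRight (hw : Measurable w) : Measurable (bvRight μ w a c) := by
  have hmeas : Measurable fun z : ℝ × ℝ => (Ioc a z.1).indicator w z.2 :=
    (hw.comp measurable_snd).indicator (s := {z : ℝ × ℝ | z.2 ∈ Ioc a z.1}) <|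
      (measurableSet_lt measurable_const measurable_snd).inter
        (measurableSet_le measurable_snd measurable_fst)
  unfold bvRight
  simpa only [integral_indicator measurableSet_Ioc] using
    (hmeas.stronglyMeasurable.integral_prod_right' (ν := μ)).measurable.const_sub c

theorem measurable_bvLeft (hw : Measurable w) : Measurable (bvLeft μ w a c) := by
  have hmeas : Measurable fun z : ℝ × ℝ => (Ioo a z.1).indicator w z.2 :=
    (hw.comp measurable_snd).indicator (s := {z : ℝ × ℝ | z.2 ∈ Ioo a z.1}) <|
      (measurableSet_lt measurable_const measurable_snd).inter
        (measurableSet_lt measurable_snd measurable_fst)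
  unfold bvLeft
  simpa only [integral_indicator measurableSet_Ioo] using
    (hmeas.stronglyMeasurable.integral_prod_right' (ν := μ)).measurable.const_sub c

namespace BVUniformPos

theorem integrableOn_div {S : Set ℝ} (h : BVUniformPos μ w a c S) (hS : MeasurableSet S)
    (hw : Measurable w) (hu : IntegrableOn u S μ) :
    IntegrableOn (fun s => u s / bvRight μ w a c s) S μ := by
  obtain ⟨k, hk, hle⟩ := h
  refine hu.mul_bdd (c := k⁻¹) (measurable_bvRight hw).inv.aestronglyMeasurable ?_
  filter_upwards [ae_restrict_mem hS] with s hs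
  rw [Real.norm_of_nonneg (inv_nonneg.2 (hk.le.trans (hle s hs).1))]
  exact inv_anti₀ hk (hle s hs).1

theorem integrableOn_div_mul {S : Set ℝ} (h : BVUniformPos μ w a c S) (hS : MeasurableSet S)
    (hw : Measurable w) (hu : IntegrableOn u S μ) :
    IntegrableOn (fun s => u s / (bvRight μ w a c s * bvLeft μ w a c s)) S μ := by
  obtain ⟨k, hk, hle⟩ := id h
  simp only [← div_div]
  refine (h.integrableOn_div hS hw hu).mul_bdd (c := k⁻¹)
    (measurable_bvLeft hw).inv.aestronglyMeasurable ?_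
  filter_upwards [ae_restrict_mem hS] with s hs
  rw [Real.norm_of_nonneg (inv_nonneg.2 (hk.le.trans (hle s hs).2))]
  exact inv_anti₀ hk (hle s hs).2

end BVUniformPos

-- `d(Ru) = R⁻ du + u dR`: the left limit occurs because a common jump of `R` and `u`
-- contributes to both terms.
theorem bvRight_mul_setIntegral_Ioc
    (hw : IntegrableOn w (Ioc a b) μ) (hu : IntegrableOn u (Ioc a b) μ) :
    bvRight μ w a c b * ∫ s in Ioc a b, u s ∂μ =
      (∫ s in Ioc a b, bvLeft μ w a c s * u s ∂μ) -
        ∫ s in Ioc a b, w s * ∫ r in Ioc a s, u r ∂μ ∂μ := by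
  simp only [bvRight, bvLeft, sub_mul]
  rw [setIntegral_Ioc_mul_setIntegral_Ioc hw hu,
    integral_sub (hu.const_mul c) (integrableOn_setIntegral_Ioo_mul hw hu), integral_const_mul]
  ring

namespace BVUniformPos

theorem bvRight_mul_setIntegral_div (h : BVUniformPos μ w a c (Ioc a b)) (hw : Measurable w)
    (hwint : IntegrableOn w (Ioc a b) μ) (hu : IntegrableOn u (Ioc a b) μ) :
    bvRight μ w a c b * ∫ s in Ioc a b, u s / (bvRight μ w a c s * bvLeft μ w a c s) ∂μ =
      (∫ s in Ioc a b, u s / bvRight μ w a c s ∂μ) - ∫ s in Ioc a b,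
        w s * ∫ r in Ioc a s, u r / (bvRight μ w a c r * bvLeft μ w a c r) ∂μ ∂μ := by
  rw [bvRight_mul_setIntegral_Ioc hwint (h.integrableOn_div_mul measurableSet_Ioc hw hu)]
  congr 1
  refine setIntegral_congr_fun measurableSet_Ioc fun s hs => ?_
  have := (h.bvLeft_pos hs).ne'
  field_simp

theorem inv_bvRight (h : BVUniformPos μ w a c (Ioc a b)) (hw : Measurable w)
    (hwint : IntegrableOn w (Ioc a b) μ) (hc : c ≠ 0) {t : ℝ} (ht : t ∈ Ioc a b) :
    (bvRight μ w a c t)⁻¹ =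
      c⁻¹ + ∫ s in Ioc a t, w s / (bvRight μ w a c s * bvLeft μ w a c s) ∂μ := by
  set Q : ℝ → ℝ := fun t => ∫ s in Ioc a t, w s / (bvRight μ w a c s * bvLeft μ w a c s) ∂μ
  set u : ℝ → ℝ := fun t => (bvRight μ w a c t)⁻¹ - c⁻¹ - Q t with hu
  have hwR : IntegrableOn (fun s => w s / bvRight μ w a c s) (Ioc a b) μ :=
    h.integrableOn_div measurableSet_Ioc hw hwint
  have hwQ : IntegrableOn (fun s => w s * Q s) (Ioc a b) μ :=
    integrableOn_mul_setIntegral_Ioc hwint (h.integrableOn_div_mul measurableSet_Ioc hw hwint)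
  have hwu : (fun s => w s * u s) =
      (fun s => w s / bvRight μ w a c s) - (fun s => c⁻¹ * w s) - fun s => w s * Q s := by
    funext s
    simp only [hu, Pi.sub_apply]
    ring
  suffices hzero : u t = 0 by
    rw [hu] at hzero
    linarith
  refine eq_zero_of_bvRight_mul_add_setIntegral_eq_zero hwint
    (hwu ▸ (hwR.sub (hwint.const_mul c⁻¹)).sub hwQ) h (fun t ht => ?_) ht
  have hsub : Ioc a t ⊆ Ioc a b := Ioc_subset_Ioc_right ht.2
  have hRQ : bvRight μ w a c t * Q t = _ := (h.mono hsub).bvRight_mul_setIntegral_div hw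
    (hwint.mono_set hsub) (hwint.mono_set hsub)
  have hRinv : bvRight μ w a c t * (bvRight μ w a c t)⁻¹ = 1 :=
    mul_inv_cancel₀ (h.bvRight_pos ht).ne'
  have hRc : bvRight μ w a c t * c⁻¹ = 1 - c⁻¹ * ∫ s in Ioc a t, w s ∂μ := by
    rw [bvRight, sub_mul, mul_inv_cancel₀ hc, mul_comm c⁻¹]
  rw [hwu, integral_sub' ((hwR.mono_set hsub).sub ((hwint.mono_set hsub).const_mul c⁻¹))
    (hwQ.mono_set hsub), integral_sub' (hwR.mono_set hsub) ((hwint.mono_set hsub).const_mul c⁻¹),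
    integral_const_mul]
  linear_combination hRinv - hRc - hRQ

theorem exists_tendsto_bvRight_mul_setIntegral_div (h : BVUniformPos μ w a c (Ioo a b))
    (hab : a < b) (hw : Measurable w) (hwint : IntegrableOn w (Ioo a b) μ)
    (hg : IntegrableOn g (Ioo a b) μ) :
    ∃ L, Tendsto (fun t => bvRight μ w a c t *
      ∫ s in Ioc a t, g s / (bvRight μ w a c s * bvLeft μ w a c s) ∂μ) (𝓝[<] b) (𝓝 L) :=
  ⟨_, (tendsto_bvRight_nhdsLT hab hwint).mul <|
    tendsto_setIntegral_Ioc_nhdsLT hab (h.integrableOn_div_mul measurableSet_Ioo hw hg)⟩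

end BVUniformPos

-- L'Hôpital's rule for `∫ g / (R R⁻) dμ` over `1 / R = 1 / c + ∫ w / (R R⁻) dμ`, with `m` the limit
-- of `g / w`.
theorem tendsto_bvRight_mul_setIntegral_div_of_bvLeft_eq_zero {m : ℝ} (hab : a < b)
    (hw : Measurable w) (hwint : IntegrableOn w (Ioo a b) μ) (hw0 : ∀ s ∈ Ioo a b, 0 ≤ w s)
    (hc : 0 < c) (hR : ∀ t ∈ Ioo a b, 0 < bvRight μ w a c t) (hb : bvLeft μ w a c b = 0)
    (hg : ∀ t ∈ Ioo a b, IntegrableOn g (Ioc a t) μ)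
    (hgw : (fun t => g t - m * w t) =o[𝓝[<] b] w) :
    Tendsto (fun t => bvRight μ w a c t *
      ∫ s in Ioc a t, g s / (bvRight μ w a c s * bvLeft μ w a c s) ∂μ) (𝓝[<] b) (𝓝 m) := by
  set R := bvRight μ w a c
  set D : ℝ → ℝ := fun s => R s * bvLeft μ w a c s
  have hsub : ∀ t ∈ Ioo a b, Ioc a t ⊆ Ioo a b := fun t ht s hs => ⟨hs.1, hs.2.trans_lt ht.2⟩
  have hwt : ∀ t ∈ Ioo a b, IntegrableOn w (Ioc a t) μ := fun t ht => hwint.mono_set (hsub t ht)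
  have hpos : ∀ t ∈ Ioo a b, BVUniformPos μ w a c (Ioc a t) := fun t ht =>
    bvUniformPos_Ioc (hwt t ht) (.inl fun s hs => hw0 s (hsub t ht hs)) hc (hR t ht)
  have hD : ∀ s ∈ Ioo a b, 0 ≤ D s := fun s hs =>
    (mul_pos (hR s hs) ((hpos s hs).bvLeft_pos (right_mem_Ioc.2 hs.1))).le
  have hinv : ∀ t ∈ Ioo a b, ∫ s in Ioc a t, w s / D s ∂μ = (R t)⁻¹ - c⁻¹ := fun t ht => by
    rw [(hpos t ht).inv_bvRight hw (hwt t ht) hc.ne' (right_mem_Ioc.2 ht.1), add_sub_cancel_left]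
  have hev : ∀ᶠ t in 𝓝[<] b, t ∈ Ioo a b := Ioo_mem_nhdsLT hab
  have hRlim : Tendsto R (𝓝[<] b) (𝓝 0) := hb ▸ tendsto_bvRight_nhdsLT hab hwint
  have hlim : Tendsto (fun t => ∫ s in Ioc a t, w s / D s ∂μ) (𝓝[<] b) atTop :=
    (tendsto_atTop_add_const_right _ (-c⁻¹) <| tendsto_inv_nhdsGT_zero.comp <|
      tendsto_nhdsWithin_iff.2 ⟨hRlim, hev.mono hR⟩).congr' (hev.mono fun t ht => (hinv t ht).symm)
  have hRw : Tendsto (fun t => R t * ∫ s in Ioc a t, w s / D s ∂μ) (𝓝[<] b) (𝓝 1) := by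
    have h := (hRlim.mul_const c⁻¹).const_sub 1
    rw [zero_mul, sub_zero] at h
    refine h.congr' (hev.mono fun t ht => ?_)
    simp only [hinv t ht, mul_sub, mul_inv_cancel₀ (hR t ht).ne']
  have hgD : (fun s => g s / D s - m * (w s / D s)) =o[𝓝[<] b] fun s => w s / D s := by
    simpa only [div_eq_mul_inv, sub_mul, mul_assoc] using
      hgw.mul_isBigO (Asymptotics.isBigO_refl (fun s => (D s)⁻¹) _)
  simpa only [mul_one] using tendsto_mul_setIntegral_Ioc_nhdsLT hab
    (fun t ht => (hpos t ht).integrableOn_div_mul measurableSet_Ioc hw (hg t ht))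
    (fun t ht => (hpos t ht).integrableOn_div_mul measurableSet_Ioc hw (hwt t ht))
    (fun s hs => div_nonneg (hw0 s hs) (hD s hs)) hgD hlim hRw

end BoundedVariation

section Gluing

theorem continuousOn_Ico_of_forall_Icc {f : ℝ → ℝ} {a b : ℝ}
    (h : ∀ t ∈ Ico a b, ContinuousOn f (Icc a t)) : ContinuousOn f (Ico a b) := fun t ht => by
  obtain ⟨r, htr, hrb⟩ := exists_between ht.2
  refine (h r ⟨ht.1.trans htr.le, hrb⟩ t ⟨ht.1, htr.le⟩).mono_of_mem_nhdsWithin ?_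
  filter_upwards [self_mem_nhdsWithin, mem_nhdsWithin_of_mem_nhds (Iio_mem_nhds htr)]
    with s hs hsr using ⟨hs.1, hsr.le⟩

theorem continuousOn_Ioo_of_Ico_of_comp_neg {f : ℝ → ℝ} {a b : ℝ} (ha : a < 0) (hb : 0 < b)
    (h₁ : ContinuousOn f (Ico 0 b)) (h₂ : ContinuousOn (fun t => f (-t)) (Ico 0 (-a))) :
    ContinuousOn f (Ioo a b) := by
  have hright : ContinuousOn (fun t => f (max t 0)) (Ioo a b) :=
    h₁.comp (f := fun t => max t 0) (by fun_prop) fun t ht => ⟨le_max_right _ _, max_lt ht.2 hb⟩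
  have hleft : ContinuousOn (fun t => f (-max (-t) 0)) (Ioo a b) :=
    h₂.comp (f := fun t => max (-t) 0) (by fun_prop) fun t ht =>
      ⟨le_max_right _ _, max_lt (neg_lt_neg ht.1) (neg_pos.2 ha)⟩
  refine ((hright.add hleft).sub (continuousOn_const (c := f 0))).congr fun t _ => ?_
  rcases le_total t 0 with ht | ht
  · simp [ht]
  · simp [ht]

theorem tendsto_comp_neg_nhdsLT_neg_iff {F : ℝ → ℝ} {a : ℝ} {l : Filter ℝ} :
    Tendsto (fun t => F (-t)) (𝓝[<] (-a)) l ↔ Tendsto F (𝓝[>] a) l := by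
  refine ⟨fun h => ?_, fun h => h.comp tendsto_neg_nhdsLT_neg⟩
  simpa only [comp_def, neg_neg] using h.comp (tendsto_neg_nhdsGT (a := a))

theorem setIntegral_neg_measure (μ : Measure ℝ) (S : Set ℝ) (f : ℝ → ℝ) :
    ∫ s in S, f s ∂μ.neg = ∫ s in -S, f (-s) ∂μ :=
  setIntegral_map_equiv (MeasurableEquiv.neg ℝ) f S

theorem exists_continuous_linear_extension {F : ℝ → ℝ} {a b L₁ L₂ : ℝ} (ha : a < 0) (hb : 0 < b)
    (hF : ContinuousOn F (Ioo a b)) (h₁ : Tendsto F (𝓝[>] a) (𝓝 L₁))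
    (h₂ : Tendsto F (𝓝[<] b) (𝓝 L₂)) :
    ∃ g : ℝ → ℝ, Continuous g ∧ (∀ t ∈ Ioo a b, g t = F t) ∧
      (∀ t, b ≤ t → g t = g b / b * t) ∧ ∀ t ≤ a, g t = g a / a * t := by
  have hab : a < b := ha.trans hb
  set E : ℝ → ℝ := IccExtend hab.le ((Icc a b).domRestrict (extendFrom (Ioo a b) F))
  have hEcont : Continuous E := (continuousOn_iff_continuous_domRestrict.1
    (continuousOn_Icc_extendFrom_Ioo hF h₁ h₂)).Icc_extend'
  have hEIoo : ∀ t ∈ Ioo a b, E t = F t := fun t ht =>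
    (IccExtend_of_mem _ _ (Ioo_subset_Icc_self ht)).trans (extendFrom_extends hF t ht)
  have hEb : ∀ t, b ≤ t → E t = L₂ := fun t ht =>
    (IccExtend_of_right_le _ _ ht).trans (eq_lim_at_right_extendFrom_Ioo hab h₂)
  have hEa : ∀ t ≤ a, E t = L₁ := fun t ht =>
    (IccExtend_of_le_left _ _ ht).trans (eq_lim_at_left_extendFrom_Ioo hab h₁)
  set g : ℝ → ℝ := fun t => E t + L₂ / b * (max t b - b) + L₁ / a * (min t a - a) with hg
  have hgb : ∀ t, b ≤ t → g t = L₂ / b * t := fun t ht => by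
    simp only [hg, hEb t ht, max_eq_left ht, min_eq_right (hab.le.trans ht)]
    field_simp
    ring
  have hga : ∀ t ≤ a, g t = L₁ / a * t := fun t ht => by
    simp only [hg, hEa t ht, max_eq_right (ht.trans hab.le), min_eq_left ht]
    field_simp [ha.ne]
    ring
  refine ⟨g, by fun_prop, fun t ht => ?_, fun t ht => ?_, fun t ht => ?_⟩
  · simp [hg, hEIoo t ht, ht.1.le, ht.2.le]
  · rw [hgb t ht, hgb b le_rfl, div_mul_cancel₀ _ hb.ne']
  · rw [hga t ht, hga a le_rfl, div_mul_cancel₀ _ ha.ne]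

theorem isLittleO_sub_div_mul_nhdsLT {g : ℝ → ℝ} {a : ℝ} (ha : 0 < a)
    (hg : Tendsto g (𝓝[<] a) (𝓝 (g a))) : (fun t => g t - g a / a * t) =o[𝓝[<] a] fun t => t := by
  have hid : Tendsto (fun t : ℝ => t) (𝓝[<] a) (𝓝 a) := tendsto_id.mono_left nhdsWithin_le_nhds
  refine Asymptotics.isLittleO_of_tendsto' ?_ ?_
  · filter_upwards [Ioo_mem_nhdsLT ha] with t ht h0 using absurd h0 ht.1.ne'
  · have := (hg.sub (hid.const_mul (g a / a))).div hid ha.ne'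
    rwa [div_mul_cancel₀ _ ha.ne', sub_self, zero_div] at this

end Gluing

namespace NormBV0

/-- The total variation `|ν|`. -/
noncomputable def variation (P : NormBV0) : Measure ℝ := P.νp + P.νm

open Classical in
/-- The sign `σ` for which `ν = σ|ν|` when `ν` or `-ν` is nonnegative. -/
noncomputable def sgn (P : NormBV0) : ℝ := if P.νm = 0 then 1 else -1

/-- The density `s ↦ σs` for which `dR = -σs d|ν|(s)`. -/
noncomputable def weight (P : NormBV0) (s : ℝ) : ℝ := P.sgn * s

/-- The function `R` on `[0, a)`, as the cumulative integral of its differential. -/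
noncomputable abbrev Rright (P : NormBV0) : ℝ → ℝ := bvRight P.variation P.weight 0 (P.R 0)

/-- The left limits `R(t⁻)` on `(0, a)`. -/
noncomputable abbrev Rleft (P : NormBV0) : ℝ → ℝ := bvLeft P.variation P.weight 0 (P.R 0)

/-- The part of `BVplusOn` that concerns `[0, a)`. -/
structure BVplusRight (P : NormBV0) (a : ℝ) : Prop where
  pos : 0 < a
  le_one : a ≤ 1
  finite : IsFiniteMeasure P.variation
  R_pos : ∀ t ∈ Ico 0 a, 0 < P.R t
  sign : P.νm = 0 ∨ P.νp = 0

/-- The part of `memDI` that concerns `[0, a)`. -/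
def memDRight (P : NormBV0) (a : ℝ) (f : ℝ → ℝ) : Prop :=
  ContinuousOn f (Ico 0 a) ∧ (∃ L, Tendsto (fun t => P.R t * f t) (𝓝[<] a) (𝓝 L)) ∧
    ∃ L, Tendsto (fun t => P.integ (Ioc 0 t) f) (𝓝[<] a) (𝓝 L)

/-- The solution on `[0, a)` of `T f = g`, namely
`f(t) = g(t) / R(t) - t ∫_{(0,t]} g(s) / (R(s) R(s⁻)) dν(s)`. -/
noncomputable def rightInverse (P : NormBV0) (g : ℝ → ℝ) (t : ℝ) : ℝ :=
  g t / P.Rright t - t * (P.sgn * ∫ s in Ioc 0 t, g s / (P.Rright s * P.Rleft s) ∂P.variation)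

variable {P : NormBV0}

theorem T_of_nonneg (f : ℝ → ℝ) {t : ℝ} (ht : 0 ≤ t) :
    P.T f t = P.R t * f t + t * P.integ (Ioc 0 t) f := by
  rcases ht.eq_or_lt with rfl | ht
  · simp [T]
  · rw [T, if_pos ht]

theorem T_zero (f : ℝ → ℝ) : P.T f 0 = P.R 0 * f 0 := by
  rw [T_of_nonneg f le_rfl, zero_mul, add_zero]

theorem measurable_weight : Measurable P.weight := measurable_id.const_mul P.sgn

theorem sgn_eq_one_or : P.sgn = 1 ∨ P.sgn = -1 := by
  unfold sgn
  split_ifs <;> simp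

theorem weight_nonneg_or_nonpos {S : Set ℝ} (hS : ∀ s ∈ S, 0 ≤ s) :
    (∀ s ∈ S, 0 ≤ P.weight s) ∨ ∀ s ∈ S, P.weight s ≤ 0 := by
  rcases P.sgn_eq_one_or with h | h
  · exact .inl fun s hs => by simpa [weight, h] using hS s hs
  · exact .inr fun s hs => by simpa [weight, h] using hS s hs

theorem integ_eq_sgn_mul (hsign : P.νm = 0 ∨ P.νp = 0) (S : Set ℝ) (f : ℝ → ℝ) :
    P.integ S f = P.sgn * ∫ s in S, f s ∂P.variation := by
  unfold integ sgn variation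
  split_ifs with hm
  · simp [hm]
  · simp [hsign.resolve_left hm]

theorem integ_congr {S : Set ℝ} (hS : MeasurableSet S) {f g : ℝ → ℝ} (hfg : EqOn f g S) :
    P.integ S f = P.integ S g := by
  unfold integ
  rw [setIntegral_congr_fun hS hfg, setIntegral_congr_fun hS hfg]

namespace BVplusRight

variable {a : ℝ} (h : P.BVplusRight a)
include h

theorem R_eq_Rright {t : ℝ} (ht : t ∈ Ico 0 a) : P.R t = P.Rright t := by
  rw [P.fund_pos t ⟨ht.1, ht.2.trans_le h.le_one⟩, Rright, bvRight]
  simp only [weight]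
  rw [integral_const_mul, ← integ_eq_sgn_mul h.sign, integ]

theorem T_eq (f : ℝ → ℝ) {t : ℝ} (ht : t ∈ Ico 0 a) :
    P.T f t = P.Rright t * f t + t * (P.sgn * ∫ s in Ioc 0 t, f s ∂P.variation) := by
  rw [T_of_nonneg f ht.1, h.R_eq_Rright ht, integ_eq_sgn_mul h.sign]

theorem R_zero_pos : 0 < P.R 0 := h.R_pos 0 (left_mem_Ico.2 h.pos)

theorem integrableOn_of_continuousOn {f : ℝ → ℝ} (hf : ContinuousOn f (Ico 0 a)) {t : ℝ}
    (ht : t < a) : IntegrableOn f (Ioc 0 t) P.variation :=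
  haveI := h.finite
  ((hf.mono (Icc_subset_Ico_right ht)).integrableOn_compact isCompact_Icc).mono_set
    Ioc_subset_Icc_self

theorem integrableOn_weight : IntegrableOn P.weight (Icc 0 a) P.variation :=
  haveI := h.finite
  (continuousOn_id.const_mul P.sgn).integrableOn_compact isCompact_Icc

theorem Rright_pos {t : ℝ} (ht : t ∈ Ico 0 a) : 0 < P.Rright t :=
  h.R_eq_Rright ht ▸ h.R_pos t ht

theorem bvUniformPos {t : ℝ} (ht : t ∈ Ico 0 a) :
    BVUniformPos P.variation P.weight 0 (P.R 0) (Ioc 0 t) :=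
  bvUniformPos_Ioc
    (h.integrableOn_weight.mono_set fun _ hs => ⟨hs.1.le, hs.2.trans ht.2.le⟩)
    (weight_nonneg_or_nonpos fun _ hs => hs.1.le) h.R_zero_pos (h.Rright_pos ht)

theorem continuousOn_T {f : ℝ → ℝ} (hf : ContinuousOn f (Ico 0 a)) :
    ContinuousOn (P.T f) (Ico 0 a) := by
  have := h.finite
  refine continuousOn_Ico_of_forall_Icc fun b hb => ?_
  have hfb : ContinuousOn f (Icc 0 b) := hf.mono (Icc_subset_Ico_right hb.2)
  refine ((hfb.const_mul (P.R 0)).sub (continuousOn_mul_setIntegral_Ioc_sub (μ := P.variation)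
    (q := fun _ => P.sgn) hfb integrableOn_const)).congr fun t ht => ?_
  rw [h.T_eq f ⟨ht.1, ht.2.trans_lt hb.2⟩, Rright, bvRight]
  simp only [weight, integral_mul_const, Pi.sub_apply]
  rw [integral_const_mul]
  ring

theorem eqOn_of_T_eqOn {f₁ f₂ : ℝ → ℝ} (hf₁ : ContinuousOn f₁ (Ico 0 a))
    (hf₂ : ContinuousOn f₂ (Ico 0 a)) (hT : EqOn (P.T f₁) (P.T f₂) (Ico 0 a)) :
    EqOn f₁ f₂ (Ico 0 a) := fun t ht => by
  rcases ht.1.eq_or_lt with rfl | ht0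
  · simpa only [T_zero, mul_eq_mul_left_iff, h.R_zero_pos.ne', or_false] using hT ht
  have hint {f : ℝ → ℝ} (hf : ContinuousOn f (Ico 0 a)) {s : ℝ} (hs : s ∈ Ioc 0 t) :
      IntegrableOn f (Ioc 0 s) P.variation :=
    h.integrableOn_of_continuousOn hf (hs.2.trans_lt ht.2)
  have hwu : ∀ s ∈ Ioc 0 t, P.weight s * ((f₁ s - f₂ s) / s) = P.sgn * (f₁ s - f₂ s) :=
    fun s hs => by rw [weight, mul_assoc, mul_div_cancel₀ _ hs.1.ne']
  have htt : t ∈ Ioc 0 t := right_mem_Ioc.2 ht0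
  have hzero : (f₁ t - f₂ t) / t = 0 := by
    refine eq_zero_of_bvRight_mul_add_setIntegral_eq_zero (u := fun s => (f₁ s - f₂ s) / s)
      (h.integrableOn_weight.mono_set fun s hs => ⟨hs.1.le, hs.2.trans ht.2.le⟩)
      (IntegrableOn.congr_fun (((hint hf₁ htt).sub (hint hf₂ htt)).const_mul P.sgn)
        (fun s hs => (hwu s hs).symm) measurableSet_Ioc) (h.bvUniformPos ht) (fun s hs => ?_) htt
    have hs' : s ∈ Ico 0 a := ⟨hs.1.le, hs.2.trans_lt ht.2⟩
    have hTs := hT hs'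
    rw [h.T_eq f₁ hs', h.T_eq f₂ hs'] at hTs
    rw [setIntegral_congr_fun measurableSet_Ioc fun r hr => hwu r ⟨hr.1, hr.2.trans hs.2⟩,
      integral_const_mul, integral_sub (hint hf₁ hs) (hint hf₂ hs)]
    have := hs.1.ne'
    field_simp
    linear_combination hTs
  exact sub_eq_zero.1 ((div_eq_zero_iff.1 hzero).resolve_right ht0.ne')

variable {g : ℝ → ℝ}

theorem rightInverse_eq {t : ℝ} (ht : t ∈ Ico 0 a) :
    P.rightInverse g t = g t / P.R 0 +
      (g t * (∫ s in Ioc 0 t, s * (P.sgn / (P.Rright s * P.Rleft s)) ∂P.variation) -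
        t * ∫ s in Ioc 0 t, g s * (P.sgn / (P.Rright s * P.Rleft s)) ∂P.variation) := by
  have hinv : (P.Rright t)⁻¹ =
      (P.R 0)⁻¹ + ∫ s in Ioc 0 t, P.weight s / (P.Rright s * P.Rleft s) ∂P.variation := by
    rcases ht.1.eq_or_lt with rfl | ht0
    · simp [bvRight]
    · have := h.finite
      exact (h.bvUniformPos ht).inv_bvRight measurable_weight
        (h.integrableOn_weight.mono_set fun s hs => ⟨hs.1.le, hs.2.trans ht.2.le⟩)
        h.R_zero_pos.ne' (right_mem_Ioc.2 ht0)
  rw [rightInverse, div_eq_mul_inv, hinv, ← integral_const_mul]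
  simp only [weight, mul_div_assoc, mul_div_left_comm P.sgn]
  ring

theorem continuousOn_rightInverse (hg : ContinuousOn g (Ico 0 a)) :
    ContinuousOn (P.rightInverse g) (Ico 0 a) := by
  have := h.finite
  refine continuousOn_Ico_of_forall_Icc fun b hb => ?_
  have hgb : ContinuousOn g (Icc 0 b) := hg.mono (Icc_subset_Ico_right hb.2)
  exact ((hgb.div_const (P.R 0)).add (continuousOn_mul_setIntegral_Ioc_sub hgb
    ((h.bvUniformPos hb).integrableOn_div_mul measurableSet_Ioc measurable_weight
      integrableOn_const))).congr fun t ht => h.rightInverse_eq ⟨ht.1, ht.2.trans_lt hb.2⟩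

theorem integ_rightInverse (hg : ContinuousOn g (Ico 0 a)) {t : ℝ} (ht : t ∈ Ico 0 a) :
    P.integ (Ioc 0 t) (P.rightInverse g) = P.sgn *
      (P.Rright t * ∫ s in Ioc 0 t, g s / (P.Rright s * P.Rleft s) ∂P.variation) := by
  have := h.finite
  have hpos := h.bvUniformPos ht
  have hw : IntegrableOn P.weight (Ioc 0 t) P.variation :=
    h.integrableOn_weight.mono_set fun s hs => ⟨hs.1.le, hs.2.trans ht.2.le⟩
  have hgt := h.integrableOn_of_continuousOn hg ht.2
  rw [integ_eq_sgn_mul h.sign, hpos.bvRight_mul_setIntegral_div measurable_weight hw hgt,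
    ← integral_sub (hpos.integrableOn_div measurableSet_Ioc measurable_weight hgt)
      (integrableOn_mul_setIntegral_Ioc hw
        (hpos.integrableOn_div_mul measurableSet_Ioc measurable_weight hgt))]
  simp only [rightInverse, weight, mul_left_comm, mul_assoc]

theorem T_rightInverse (hg : ContinuousOn g (Ico 0 a)) :
    EqOn (P.T (P.rightInverse g)) g (Ico 0 a) := fun t ht => by
  rw [T_of_nonneg _ ht.1, h.R_eq_Rright ht, h.integ_rightInverse hg ht, rightInverse]
  have := (h.Rright_pos ht).ne'
  field_simp
  ring

theorem exists_tendsto_Rright_mul_setIntegral_div (hg : ContinuousOn g (Icc 0 a)) :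
    ∃ L, Tendsto (fun t => P.Rright t *
      ∫ s in Ioc 0 t, g s / (P.Rright s * P.Rleft s) ∂P.variation) (𝓝[<] a) (𝓝 L) := by
  have := h.finite
  have hw : IntegrableOn P.weight (Ioo 0 a) P.variation :=
    h.integrableOn_weight.mono_set Ioo_subset_Icc_self
  have hR : ∀ t ∈ Ioo 0 a, 0 < P.Rright t := fun t ht => h.Rright_pos (Ioo_subset_Ico_self ht)
  have hnonneg : 0 ≤ P.Rleft a := ge_of_tendsto (tendsto_bvRight_nhdsLT h.pos hw) <| by
    filter_upwards [Ioo_mem_nhdsLT h.pos] with t ht using (hR t ht).le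
  rcases hnonneg.eq_or_lt with hzero | hpos
  · have hsgn : P.sgn = 1 := P.sgn_eq_one_or.resolve_right fun hsgn => by
      have : ∫ s in Ioo 0 a, P.weight s ∂P.variation ≤ 0 :=
        setIntegral_nonpos measurableSet_Ioo fun s hs => by simpa [weight, hsgn] using hs.1.le
      rw [Rleft, bvLeft] at hzero
      linarith [h.R_zero_pos]
    have hweight : P.weight = fun s => s := funext fun s => by simp [weight, hsgn]
    refine ⟨g a / a, tendsto_bvRight_mul_setIntegral_div_of_bvLeft_eq_zero h.pos measurable_weight
      hw (fun s hs => by simpa [hweight] using hs.1.le) h.R_zero_pos hR hzero.symm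
      (fun t ht => h.integrableOn_of_continuousOn (hg.mono Ico_subset_Icc_self) ht.2) ?_⟩
    rw [hweight]
    exact isLittleO_sub_div_mul_nhdsLT h.pos
      ((hg a (right_mem_Icc.2 h.pos.le)).mono_of_mem_nhdsWithin (Icc_mem_nhdsLT h.pos))
  · exact (bvUniformPos_Ioo hw (weight_nonneg_or_nonpos fun s hs => hs.1.le) h.R_zero_pos
      hpos).exists_tendsto_bvRight_mul_setIntegral_div h.pos measurable_weight hw
        ((hg.integrableOn_compact isCompact_Icc).mono_set Ioo_subset_Icc_self)

theorem memDRight_rightInverse (hg : ContinuousOn g (Icc 0 a)) :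
    P.memDRight a (P.rightInverse g) := by
  have hg' : ContinuousOn g (Ico 0 a) := hg.mono Ico_subset_Icc_self
  have hev : ∀ᶠ t in 𝓝[<] a, t ∈ Ico 0 a := Ico_mem_nhdsLT h.pos
  obtain ⟨L, hL⟩ := h.exists_tendsto_Rright_mul_setIntegral_div hg
  have hinteg : Tendsto (fun t => P.integ (Ioc 0 t) (P.rightInverse g)) (𝓝[<] a)
      (𝓝 (P.sgn * L)) :=
    (hL.const_mul P.sgn).congr' (hev.mono fun t ht => (h.integ_rightInverse hg' ht).symm)
  have hga : Tendsto g (𝓝[<] a) (𝓝 (g a)) :=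
    (hg a (right_mem_Icc.2 h.pos.le)).mono_of_mem_nhdsWithin (Icc_mem_nhdsLT h.pos)
  refine ⟨h.continuousOn_rightInverse hg', ⟨g a - a * (P.sgn * L), ?_⟩, _, hinteg⟩
  refine (hga.sub ((tendsto_id.mono_left nhdsWithin_le_nhds).mul hinteg)).congr'
    (hev.mono fun t ht => ?_)
  rw [← h.T_rightInverse hg' ht, T_of_nonneg _ ht.1, id, add_sub_cancel_right]

end BVplusRight

theorem memDRight.exists_tendsto_T {a : ℝ} (ha : 0 < a) {f : ℝ → ℝ} (hf : P.memDRight a f) :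
    ∃ L, Tendsto (P.T f) (𝓝[<] a) (𝓝 L) := by
  obtain ⟨-, ⟨L, hL⟩, M, hM⟩ := hf
  refine ⟨L + a * M,
    (hL.add ((tendsto_id.mono_left nhdsWithin_le_nhds).mul hM)).congr' ?_⟩
  filter_upwards [Ioo_mem_nhdsLT ha] with t ht using (T_of_nonneg f ht.1.le).symm

theorem integ_Ioc_congr {a : ℝ} {f g : ℝ → ℝ} (hfg : EqOn f g (Ico 0 a)) {t : ℝ} (ht : t < a) :
    P.integ (Ioc 0 t) f = P.integ (Ioc 0 t) g :=
  integ_congr measurableSet_Ioc fun _ hs => hfg ⟨hs.1.le, hs.2.trans_lt ht⟩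

theorem T_congr {a : ℝ} {f g : ℝ → ℝ} (hfg : EqOn f g (Ico 0 a)) :
    EqOn (P.T f) (P.T g) (Ico 0 a) := fun t ht => by
  rw [T_of_nonneg f ht.1, T_of_nonneg g ht.1, hfg ht, integ_Ioc_congr hfg ht.2]

theorem memDRight.congr {a : ℝ} (ha : 0 < a) {f g : ℝ → ℝ} (hg : P.memDRight a g)
    (hfg : EqOn f g (Ico 0 a)) : P.memDRight a f := by
  obtain ⟨hcont, ⟨L, hL⟩, M, hM⟩ := hg
  have hev : ∀ᶠ t in 𝓝[<] a, t ∈ Ico 0 a := Ico_mem_nhdsLT ha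
  exact ⟨hcont.congr hfg, ⟨L, hL.congr' (hev.mono fun t ht => congrArg _ (hfg ht).symm)⟩,
    M, hM.congr' (hev.mono fun t ht => (integ_Ioc_congr hfg ht.2).symm)⟩

/-- The pair `(R(-t), -ν(-S))`, which exchanges the two halves of `(-1, 1)`. -/
noncomputable def reflect (P : NormBV0) : NormBV0 where
  R t := P.R (-t)
  νp := P.νp.neg
  νm := P.νm.neg
  sing := by
    obtain ⟨S, hS, hp, hm⟩ := P.sing
    refine ⟨-S, hS.neg, ?_, ?_⟩
    · rwa [Measure.neg_apply, neg_neg]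
    · rwa [Measure.neg_apply, ← compl_neg, neg_neg]
  supp_p := by simpa [Measure.neg_apply] using P.supp_p
  supp_m := by simpa [Measure.neg_apply] using P.supp_m
  locfin_p K hK hsub := by
    rw [Measure.neg_apply]
    exact P.locfin_p (-K) hK.neg fun x hx => by simpa [and_comm, neg_lt] using hsub hx
  locfin_m K hK hsub := by
    rw [Measure.neg_apply]
    exact P.locfin_m (-K) hK.neg fun x hx => by simpa [and_comm, neg_lt] using hsub hx
  zero_p := by simpa [Measure.neg_apply] using P.zero_p
  zero_m := by simpa [Measure.neg_apply] using P.zero_m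
  fund_pos t ht := by
    rw [neg_zero, P.fund_neg (-t) ⟨neg_lt_neg ht.2, neg_nonpos.2 ht.1⟩]
    simp only [setIntegral_neg_measure, neg_Ioc, neg_zero]
    rw [integral_neg, integral_neg]
    ring
  fund_neg t ht := by
    rw [neg_zero, P.fund_pos (-t) ⟨neg_nonneg.2 ht.2, neg_lt.1 ht.1⟩]
    simp only [setIntegral_neg_measure, neg_Ico, neg_zero]
    rw [integral_neg, integral_neg]
    ring

theorem integ_reflect (S : Set ℝ) (f : ℝ → ℝ) :
    P.reflect.integ S (fun s => f (-s)) = P.integ (-S) f := by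
  simp only [integ, reflect, setIntegral_neg_measure, neg_neg]

theorem T_reflect (f : ℝ → ℝ) (t : ℝ) :
    P.reflect.T (fun s => f (-s)) t = P.T f (-t) := by
  unfold T
  simp only [integ_reflect, neg_Ioc, neg_Ico, neg_zero]
  rcases lt_trichotomy t 0 with ht | rfl | ht
  · rw [if_neg ht.not_gt, if_pos (neg_pos.2 ht)]
    simp only [reflect]
    ring
  · simp [reflect]
  · rw [if_pos ht, if_neg (neg_neg_of_pos ht).not_gt]
    simp only [reflect]
    ring

variable {am ap : ℝ}

theorem memDI_iff (ham : am < 0) (hap : 0 < ap) {f : ℝ → ℝ} :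
    P.memDI am ap f ↔
      P.memDRight ap f ∧ P.reflect.memDRight (-am) fun t => f (-t) := by
  have hR (L : ℝ) : Tendsto (fun t => P.reflect.R t * f (-t)) (𝓝[<] (-am)) (𝓝 L) ↔
      Tendsto (fun t => P.R t * f t) (𝓝[>] am) (𝓝 L) :=
    tendsto_comp_neg_nhdsLT_neg_iff (F := fun t => P.R t * f t)
  have hinteg (L : ℝ) :
      Tendsto (fun t => P.reflect.integ (Ioc 0 t) fun s => f (-s)) (𝓝[<] (-am)) (𝓝 L) ↔
        Tendsto (fun t => P.integ (Ico t 0) f) (𝓝[>] am) (𝓝 L) := by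
    simp only [integ_reflect, neg_Ioc, neg_zero]
    exact tendsto_comp_neg_nhdsLT_neg_iff (F := fun t => P.integ (Ico t 0) f)
  unfold memDI memDRight
  simp only [hR, hinteg]
  refine ⟨fun ⟨hcont, hRp, hRm, hIp, hIm⟩ => ⟨⟨hcont.mono fun t ht => ⟨ham.trans_le ht.1, ht.2⟩,
    hRp, hIp⟩, hcont.comp continuousOn_neg fun t ht => ?_, hRm, hIm⟩,
    fun ⟨⟨hcontp, hRp, hIp⟩, hcontm, hRm, hIm⟩ =>
      ⟨continuousOn_Ioo_of_Ico_of_comp_neg ham hap hcontp hcontm, hRp, hRm, hIp, hIm⟩⟩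
  exact ⟨lt_neg.1 ht.2, (neg_nonpos.2 ht.1).trans_lt hap⟩

namespace BVplusOn

variable (h : P.BVplusOn am ap)
include h

theorem isFiniteMeasure_variation : IsFiniteMeasure P.variation := by
  have hfinite {ν : Measure ℝ} (hsupp : ν (Ioo (-1) 1)ᶜ = 0) (hν : ν (Ioo (-1) 1) ≠ ⊤) :
      IsFiniteMeasure ν :=
    ⟨by rw [← measure_add_measure_compl measurableSet_Ioo, hsupp, add_zero]; exact hν.lt_top⟩
  have := hfinite P.supp_p h.1
  have := hfinite P.supp_m h.2.1
  unfold variation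
  infer_instance

theorem reflect : P.reflect.BVplusOn (-ap) (-am) := by
  obtain ⟨hp, hm, hR, hsign⟩ := h
  refine ⟨?_, ?_, fun t ht => hR (-t) ⟨lt_neg.1 ht.2, neg_lt.1 ht.1⟩, ?_⟩
  · simpa [NormBV0.reflect, Measure.neg_apply] using hp
  · simpa [NormBV0.reflect, Measure.neg_apply] using hm
  · exact hsign.imp (fun h => by simp [NormBV0.reflect, Measure.neg_def, h])
      fun h => by simp [NormBV0.reflect, Measure.neg_def, h]

theorem right (ham : am < 0) (hap : 0 < ap) (hap1 : ap ≤ 1) : P.BVplusRight ap where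
  pos := hap
  le_one := hap1
  finite := h.isFiniteMeasure_variation
  R_pos t ht := h.2.2.1 t ⟨ham.trans_le ht.1, ht.2⟩
  sign := h.2.2.2

theorem left (ham1 : -1 ≤ am) (ham : am < 0) (hap : 0 < ap) : P.reflect.BVplusRight (-am) :=
  h.reflect.right (neg_neg_of_pos hap) (neg_pos.2 ham) (neg_le.1 ham1)

theorem continuousOn_T (ham1 : -1 ≤ am) (ham : am < 0) (hap : 0 < ap) (hap1 : ap ≤ 1)
    {f : ℝ → ℝ} (hf : P.memDI am ap f) : ContinuousOn (P.T f) (Ioo am ap) := by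
  obtain ⟨hright, hleft⟩ := (memDI_iff ham hap).1 hf
  refine continuousOn_Ioo_of_Ico_of_comp_neg ham hap
    ((h.right ham hap hap1).continuousOn_T hright.1) ?_
  simpa only [funext (T_reflect (P := P) f)] using (h.left ham1 ham hap).continuousOn_T hleft.1

theorem eqOn_of_T_eqOn (ham1 : -1 ≤ am) (ham : am < 0) (hap : 0 < ap) (hap1 : ap ≤ 1)
    {f₁ f₂ : ℝ → ℝ} (hf₁ : P.memDI am ap f₁) (hf₂ : P.memDI am ap f₂)
    (hT : EqOn (P.T f₁) (P.T f₂) (Ioo am ap)) : EqOn f₁ f₂ (Ioo am ap) := fun t ht => by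
  obtain ⟨hright₁, hleft₁⟩ := (memDI_iff ham hap).1 hf₁
  obtain ⟨hright₂, hleft₂⟩ := (memDI_iff ham hap).1 hf₂
  rcases le_total 0 t with ht0 | ht0
  · exact (h.right ham hap hap1).eqOn_of_T_eqOn hright₁.1 hright₂.1
      (fun s hs => hT ⟨ham.trans_le hs.1, hs.2⟩) ⟨ht0, ht.2⟩
  · have := (h.left ham1 ham hap).eqOn_of_T_eqOn hleft₁.1 hleft₂.1
      (fun s hs => by
        simpa only [T_reflect] using hT ⟨lt_neg.1 hs.2, (neg_nonpos.2 hs.1).trans_lt hap⟩)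
      ⟨neg_nonneg.2 ht0, neg_lt_neg ht.1⟩
    simpa only [neg_neg] using this

theorem exists_memDI_T_eqOn (ham1 : -1 ≤ am) (ham : am < 0) (hap : 0 < ap) (hap1 : ap ≤ 1)
    {g : ℝ → ℝ} (hg : ContinuousOn g (Icc am ap)) :
    ∃ f, P.memDI am ap f ∧ EqOn (P.T f) g (Ioo am ap) := by
  have hright := h.right ham hap hap1
  have hleft := h.left ham1 ham hap
  have hgr : ContinuousOn g (Icc 0 ap) := hg.mono (Icc_subset_Icc_left ham.le)
  have hgl : ContinuousOn (fun t => g (-t)) (Icc 0 (-am)) := hg.comp continuousOn_neg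
    fun t ht => ⟨le_neg.1 ht.2, (neg_nonpos.2 ht.1).trans hap.le⟩
  set f₁ := P.rightInverse g
  set f₂ := P.reflect.rightInverse fun t => g (-t)
  have hf0 : f₁ 0 = f₂ 0 := by simp [f₁, f₂, rightInverse, bvRight, NormBV0.reflect]
  set f : ℝ → ℝ := fun t => if 0 ≤ t then f₁ t else f₂ (-t) with hf
  have hff₁ : EqOn f f₁ (Ico 0 ap) := fun t ht => if_pos ht.1
  have hff₂ : EqOn (fun t => f (-t)) f₂ (Ico 0 (-am)) := fun t ht => by
    rcases ht.1.eq_or_lt with rfl | ht0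
    · simp [hf, hf0]
    · simp [hf, ht0.not_ge]
  refine ⟨f, (memDI_iff ham hap).2 ⟨(hright.memDRight_rightInverse hgr).congr hap hff₁,
    (hleft.memDRight_rightInverse hgl).congr (neg_pos.2 ham) hff₂⟩, fun t ht => ?_⟩
  rcases le_total 0 t with ht0 | ht0
  · exact (T_congr hff₁ ⟨ht0, ht.2⟩).trans
      (hright.T_rightInverse (hgr.mono Ico_subset_Icc_self) ⟨ht0, ht.2⟩)
  · have ht' : -t ∈ Ico 0 (-am) := ⟨neg_nonneg.2 ht0, neg_lt_neg ht.1⟩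
    simpa only [T_reflect, neg_neg] using (T_congr hff₂ ht').trans
      (hleft.T_rightInverse (hgl.mono Ico_subset_Icc_self) ht')

end BVplusOn

theorem memDI.exists_tendsto_T (ham : am < 0) (hap : 0 < ap) {f : ℝ → ℝ}
    (hf : P.memDI am ap f) :
    (∃ L, Tendsto (P.T f) (𝓝[<] ap) (𝓝 L)) ∧ ∃ L, Tendsto (P.T f) (𝓝[>] am) (𝓝 L) := by
  obtain ⟨hright, hleft⟩ := (memDI_iff ham hap).1 hf
  obtain ⟨L, hL⟩ := hleft.exists_tendsto_T (neg_pos.2 ham)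
  refine ⟨hright.exists_tendsto_T hap, L, tendsto_comp_neg_nhdsLT_neg_iff.1 ?_⟩
  simpa only [T_reflect] using hL.congr (T_reflect f)

end NormBV0

/-- For a `BV₊` pair on `I = (a₋, a₊)`, the transform of every
`f ∈ D^I_{R,ν}` has limits at `a₊⁻` and `a₋⁺`, and extending it linearly outside `I`
yields a bijection from `D^I_{R,ν}` onto the continuous functions on `[-1,1]` that are
linear through the origin on `[a₊,1]` and on `[-1,a₋]`. -/
theorem bv0_bijection_subinterval (P : NormBV0) (am ap : ℝ)
    (h1 : -1 ≤ am) (h2 : am < 0) (h3 : 0 < ap) (h4 : ap ≤ 1)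
    (hBV : P.BVplusOn am ap) :
    (∀ f : ℝ → ℝ, P.memDI am ap f →
      (∃ L : ℝ, Tendsto (P.T f) (𝓝[<] ap) (𝓝 L)) ∧
      (∃ L : ℝ, Tendsto (P.T f) (𝓝[>] am) (𝓝 L)) ∧
      (∃ g : ℝ → ℝ, ContinuousOn g (Set.Icc (-1 : ℝ) 1) ∧
        (∀ t ∈ Set.Ioo am ap, g t = P.T f t) ∧
        (∀ t ∈ Set.Icc ap 1, g t = g ap / ap * t) ∧
        (∀ t ∈ Set.Icc (-1 : ℝ) am, g t = g am / am * t))) ∧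
    (∀ f₁ f₂ : ℝ → ℝ, P.memDI am ap f₁ → P.memDI am ap f₂ →
      (∀ t ∈ Set.Ioo am ap, P.T f₁ t = P.T f₂ t) →
      ∀ t ∈ Set.Ioo am ap, f₁ t = f₂ t) ∧
    (∀ g : ℝ → ℝ, ContinuousOn g (Set.Icc (-1 : ℝ) 1) →
      (∀ t ∈ Set.Icc ap 1, g t = g ap / ap * t) →
      (∀ t ∈ Set.Icc (-1 : ℝ) am, g t = g am / am * t) →
      ∃ f : ℝ → ℝ, P.memDI am ap f ∧ ∀ t ∈ Set.Ioo am ap, P.T f t = g t) := by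
  refine ⟨fun f hf => ?_, fun f₁ f₂ hf₁ hf₂ hT => hBV.eqOn_of_T_eqOn h1 h2 h3 h4 hf₁ hf₂ hT,
    fun g hg _ _ => hBV.exists_memDI_T_eqOn h1 h2 h3 h4 (hg.mono (Icc_subset_Icc h1 h4))⟩
  obtain ⟨⟨Lp, hLp⟩, Lm, hLm⟩ := hf.exists_tendsto_T h2 h3
  obtain ⟨g, hg, hgT, hgap, hgam⟩ :=
    exists_continuous_linear_extension h2 h3 (hBV.continuousOn_T h1 h2 h3 h4 hf) hLm hLp
  exact ⟨⟨Lp, hLp⟩, ⟨Lm, hLm⟩, g, hg.continuousOn, hgT, fun t ht => hgap t ht.1,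
    fun t ht => hgam t ht.2⟩
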